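/- There exist constants c > 0 and n₀ such that for every real δ with 0 < δ ≤ 1/4 and every integer n ≥ n₀/δ, there exists a spanoid S on [n] that is a 2-LCS with error-tolerance δ and has rank(S) ≥ c · (1/δ) · log₂(δn). -/

import Mathlib

open scoped BigOperators

/-- A spanoid on ground set `X`: a set of inference rules `(A, i)`,
read as "`A` spans `i`". -/
abbrev SpanoidOn (X : Type) : Type := Set (Set X × X)

/-- The span of `T`: the smallest superset `T'` of `T` such that whenever `(A, i)` is a
rule with `A ⊆ T'`, also `i ∈ T'`. -/
def sSpan {X : Type} (S : SpanoidOn X) (T : Set X) : Set X :=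
  ⋂₀ {T' : Set X | T ⊆ T' ∧ ∀ p ∈ S, p.1 ⊆ T' → p.2 ∈ T'}

/-- The rank of a spanoid: the minimum size of a subset spanning the whole ground set. -/
noncomputable def sRank {X : Type} [Fintype X] (S : SpanoidOn X) : ℕ :=
  sInf {k : ℕ | ∃ T : Set X, T.ncard = k ∧ sSpan S T = Set.univ}

/-- A set is closed if it equals its own span. -/
def sClosed {X : Type} (S : SpanoidOn X) (B : Set X) : Prop := sSpan S B = B

/-- A set is open if its complement is closed. -/
def sOpen {X : Type} (S : SpanoidOn X) (B : Set X) : Prop := sClosed S Bᶜ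

/-- A code `C ⊆ K^X` is consistent with the spanoid `S` if for every rule `(A, i)` of `S`
there is a function `g` with `c i = g (c|_A)` for all codewords `c ∈ C`. -/
def sConsistent {X K : Type} (S : SpanoidOn X) (C : Set (X → K)) : Prop :=
  ∀ p ∈ S, ∃ g : (↥p.1 → K) → K, ∀ c ∈ C, c p.2 = g (fun a => c a.1)

/-- The functional rank of a spanoid: the supremum of `log |C| / log |Σ|` over all finite
alphabets `Σ` (of size at least 2) and all codes `C ⊆ Σ^X` consistent with `S`. -/
noncomputable def sFrank {X : Type} (S : SpanoidOn X) : ℝ :=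
  sSup {d : ℝ | ∃ m : ℕ, 2 ≤ m ∧ ∃ C : Set (X → Fin m),
    sConsistent S C ∧ d = Real.log (Nat.card C) / Real.log m}

/-- Feasibility for the entropy linear program of a spanoid. -/
def sEntFeasible {X : Type} (S : SpanoidOn X) (f : Set X → ℝ) : Prop :=
  f ∅ = 0 ∧ (∀ i : X, f {i} ≤ 1) ∧
  (∀ A B : Set X, f (A ∪ B) + f (A ∩ B) ≤ f A + f B) ∧
  (∀ A B : Set X, A ⊆ B → f A ≤ f B) ∧
  (∀ A : Set X, ∀ i ∈ sSpan S A, f (A ∪ {i}) = f A)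

/-- The optimum of the entropy linear program: maximize `f(X)` over feasible `f`. -/
noncomputable def sLPentropy {X : Type} (S : SpanoidOn X) : ℝ :=
  sSup {y : ℝ | ∃ f : Set X → ℝ, sEntFeasible S f ∧ y = f Set.univ}

/-- The optimum of the covering linear program: minimize `∑ i, x i` over `x ≥ 0` such that
`∑_{i ∈ B} x i ≥ 1` for every nonempty open set `B`. -/
noncomputable def sLPcover {X : Type} [Fintype X] (S : SpanoidOn X) : ℝ :=
  sInf {y : ℝ | ∃ x : X → ℝ, (∀ i, 0 ≤ x i) ∧
    (∀ B : Set X, B.Nonempty → sOpen S B → 1 ≤ ∑ i, B.indicator x i) ∧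
    y = ∑ i, x i}

/-- A spanoid on `[n]` is a `q`-LCS with error-tolerance `δ` if every `i` is spanned by at
least `δ n` pairwise disjoint `q`-element subsets. -/
def sIsLCS {n : ℕ} (q : ℕ) (δ : ℝ) (S : SpanoidOn (Fin n)) : Prop :=
  ∀ i : Fin n, ∃ M : Finset (Finset (Fin n)),
    δ * n ≤ (M.card : ℝ) ∧
    (∀ A ∈ M, A.card = q) ∧
    ((M : Set (Finset (Fin n))).Pairwise fun A B => Disjoint A B) ∧
    ∀ A ∈ M, ((A : Set (Fin n)), i) ∈ S

/-!
The Hadamard code of dimension `k` has one position for each `w ∈ 𝔽₂ᵏ`, carrying the vector `w`.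
For `v ≠ 0` the pairs `{u, u + v}` partition the positions, and each of them spans `v`, so every
position is spanned by `2ᵏ⁻¹` disjoint pairs. On the other hand a spanning set of positions must
span `𝔽₂ᵏ` linearly, so the rank is at least `k`. To reach tolerance `δ` on `n` positions it
suffices that `2ᵏ⁻¹ ≥ δ n`. With `k` about `log₂ (δ n)` such a code occupies only `O(δ n)`
positions, which leaves room for `Ω(1/δ)` independent copies of it, and their ranks add up.
-/

section Spanoid

variable {X : Type} (S : SpanoidOn X)

theorem subset_sSpan (T : Set X) : T ⊆ sSpan S T :=
  Set.subset_sInter fun _ hT' => hT'.1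

variable {S} in
theorem sSpan_subset {T T' : Set X} (hT : T ⊆ T') (hS : ∀ p ∈ S, p.1 ⊆ T' → p.2 ∈ T') :
    sSpan S T ⊆ T' :=
  Set.sInter_subset_of_mem ⟨hT, hS⟩

theorem exists_ncard_eq_sRank [Fintype X] :
    ∃ T : Set X, T.ncard = sRank S ∧ sSpan S T = Set.univ :=
  Nat.sInf_mem (s := {k | ∃ T : Set X, T.ncard = k ∧ sSpan S T = Set.univ})
    ⟨_, Set.univ, rfl, Set.univ_subset_iff.1 (subset_sSpan S Set.univ)⟩

end Spanoid

section LinearSpanoid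

variable {X : Type} {V : Type*}

/-- The spanoid of linear dependence of a family of vectors `φ`: a set `A` of indices spans `i` when
`φ i` is a linear combination of the `φ a` with `a ∈ A`. Nothing excludes rules with `i ∈ A`. -/
def linearSpanoid (R : Type*) [Semiring R] [AddCommMonoid V] [Module R V] (φ : X → V) :
    SpanoidOn X :=
  {p | φ p.2 ∈ Submodule.span R (φ '' p.1)}

theorem sSpan_linearSpanoid (R : Type*) [Semiring R] [AddCommMonoid V] [Module R V] (φ : X → V)
    (T : Set X) : sSpan (linearSpanoid R φ) T = φ ⁻¹' Submodule.span R (φ '' T) := by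
  apply Set.Subset.antisymm
  · refine sSpan_subset (fun i hi => Submodule.subset_span ⟨i, hi, rfl⟩) fun p hp hpT => ?_
    exact Submodule.span_le.2 (Set.image_subset_iff.2 hpT) hp
  · exact fun i hi => Set.mem_sInter.2 fun T' hT' => hT'.2 (T, i) hi hT'.1

theorem finrank_range_le_sRank_linearSpanoid (R : Type*) [Semiring R] [StrongRankCondition R]
    [AddCommMonoid V] [Module R V] [Fintype X] (φ : X → V) :
    (Set.range φ).finrank R ≤ sRank (linearSpanoid R φ) := by
  classical
  obtain ⟨T, hcard, hT⟩ := exists_ncard_eq_sRank (linearSpanoid R φ)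
  rw [sSpan_linearSpanoid, Set.preimage_eq_univ_iff, ← Submodule.span_le] at hT
  have hspan : Submodule.span R (Set.range φ) = Submodule.span R (φ '' T) :=
    le_antisymm hT (Submodule.span_mono (Set.image_subset_range φ T))
  calc (Set.range φ).finrank R = (φ '' T).finrank R := by rw [Set.finrank, hspan, Set.finrank]
    _ ≤ (φ '' T).toFinset.card := finrank_span_le_card _
    _ = (φ '' T).ncard := (Set.ncard_eq_toFinset_card' _).symm
    _ ≤ T.ncard := Set.ncard_image_le
    _ = sRank (linearSpanoid R φ) := hcard

theorem pair_mem_linearSpanoid {R : Type*} [Ring R] [AddCommGroup V] [Module R V] {φ : X → V}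
    {i j k : X} (h : φ i ∈ Submodule.span R {φ k - φ j}) :
    (({j, k} : Set X), i) ∈ linearSpanoid R φ := by
  have hdiff : φ k - φ j ∈ Submodule.span R (φ '' {j, k}) :=
    Submodule.sub_mem _ (Submodule.subset_span ⟨k, by simp, rfl⟩)
      (Submodule.subset_span ⟨j, by simp, rfl⟩)
  exact (Submodule.span_singleton_le_iff_mem _ _).2 hdiff h

end LinearSpanoid

section OrbitPairs

variable {α : Type*} [Fintype α] [DecidableEq α] {σ : α → α}

/-- The family of all pairs `{x, σ x}`. These are the orbits of `σ` when `σ` is an involution. -/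
def orbitPairs (σ : α → α) : Finset (Finset α) :=
  Finset.univ.image fun x => {x, σ x}

theorem mem_orbitPairs {A : Finset α} : A ∈ orbitPairs σ ↔ ∃ x, {x, σ x} = A := by
  simp [orbitPairs]

theorem card_of_mem_orbitPairs (hfix : ∀ x, σ x ≠ x) {A : Finset α} (hA : A ∈ orbitPairs σ) :
    A.card = 2 := by
  obtain ⟨x, rfl⟩ := mem_orbitPairs.1 hA
  exact Finset.card_pair (hfix x).symm

theorem eq_pair_of_mem_orbitPairs (hσ : Function.Involutive σ) {A : Finset α}
    (hA : A ∈ orbitPairs σ) {x : α} (hx : x ∈ A) : A = {x, σ x} := by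
  obtain ⟨y, rfl⟩ := mem_orbitPairs.1 hA
  rcases Finset.mem_insert.1 hx with rfl | hx
  · rfl
  · rw [Finset.mem_singleton.1 hx, hσ y, Finset.pair_comm]

theorem pairwiseDisjoint_orbitPairs (hσ : Function.Involutive σ) :
    (orbitPairs σ : Set (Finset α)).PairwiseDisjoint id := by
  refine fun A hA B hB hAB => Finset.disjoint_left.2 fun x hxA hxB => hAB ?_
  exact (eq_pair_of_mem_orbitPairs hσ hA hxA).trans (eq_pair_of_mem_orbitPairs hσ hB hxB).symm

theorem card_orbitPairs_mul_two (hσ : Function.Involutive σ) (hfix : ∀ x, σ x ≠ x) :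
    (orbitPairs σ).card * 2 = Fintype.card α := by
  have hcover : (orbitPairs σ).biUnion id = Finset.univ :=
    Finset.eq_univ_of_forall fun x =>
      Finset.mem_biUnion.2 ⟨{x, σ x}, mem_orbitPairs.2 ⟨x, rfl⟩, Finset.mem_insert_self _ _⟩
  calc (orbitPairs σ).card * 2 = ∑ A ∈ orbitPairs σ, A.card :=
        (Finset.sum_const_nat fun _ => card_of_mem_orbitPairs hfix).symm
    _ = ((orbitPairs σ).biUnion id).card :=
        (Finset.card_biUnion (pairwiseDisjoint_orbitPairs hσ)).symm
    _ = Fintype.card α := by rw [hcover, Finset.card_univ]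

end OrbitPairs

theorem exists_disjoint_pairs_mem_linearSpanoid {X : Type} {R V W : Type*} [Ring R]
    [AddCommGroup V] [Module R V] [AddGroup W] [Fintype W] {φ : X → V} (e : W ↪ X) {v : W}
    (hv : v ≠ 0) (hvv : v + v = 0) {c : V} (hφ : ∀ u, φ (e (u + v)) - φ (e u) = c) :
    ∃ M : Finset (Finset X), M.card * 2 = Fintype.card W ∧ (∀ A ∈ M, A.card = 2) ∧
      ((M : Set (Finset X)).Pairwise fun A B => Disjoint A B) ∧
      ∀ A ∈ M, ∀ i, φ i ∈ Submodule.span R {c} → ((A : Set X), i) ∈ linearSpanoid R φ := by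
  classical
  have hσ : Function.Involutive (· + v) := fun u => by simp only [add_assoc, hvv, add_zero]
  have hfix : ∀ u, u + v ≠ u := fun u => by simpa using hv
  refine ⟨(orbitPairs (· + v)).map (Finset.mapEmbedding e).toEmbedding, ?_, ?_, ?_, ?_⟩
  · rw [Finset.card_map, card_orbitPairs_mul_two hσ hfix]
  · refine Finset.forall_mem_map.2 fun A hA => ?_
    exact (Finset.card_map e).trans (card_of_mem_orbitPairs hfix hA)
  · rw [Finset.coe_map]
    exact ((pairwiseDisjoint_orbitPairs hσ).mono' fun A B hAB =>
      (Finset.disjoint_map e).2 hAB).image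
  · refine Finset.forall_mem_map.2 fun A hA i hi => ?_
    obtain ⟨u, rfl⟩ := mem_orbitPairs.1 hA
    rw [← hφ u] at hi
    simpa using pair_mem_linearSpanoid hi

theorem exists_ne_zero_mem_span_singleton (R : Type*) {W : Type*} [Semiring R] [AddCommMonoid W]
    [Module R W] [Nontrivial W] (w : W) : ∃ v ≠ 0, w ∈ Submodule.span R {v} := by
  rcases eq_or_ne w 0 with rfl | hw
  · obtain ⟨v, hv⟩ := exists_ne (0 : W)
    exact ⟨v, hv, Submodule.zero_mem _⟩
  · exact ⟨w, hw, Submodule.mem_span_singleton_self w⟩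

section BlockConfig

variable {X : Type} {ι W : Type*} [DecidableEq ι]

/-- The vectors carried by disjoint copies of a Hadamard code, one copy for each element of `ι`: a
position labelled `(a, w)` by `f` carries `w` in the `a`-th summand of `ι → W`. Positions left over
after every label has been used once repeat labels, so `f` is only meant to be surjective. -/
def blockConfig [Zero W] (f : X → ι × W) (i : X) : ι → W :=
  Pi.single (f i).1 (f i).2

theorem span_range_blockConfig (R : Type*) [Semiring R] [AddCommMonoid W] [Module R W] [Finite ι]
    {f : X → ι × W} (hf : Function.Surjective f) :
    Submodule.span R (Set.range (blockConfig f)) = ⊤ := by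
  have := Fintype.ofFinite ι
  refine eq_top_iff.2 fun x _ => ?_
  rw [← Finset.univ_sum_single x]
  refine Submodule.sum_mem _ fun a _ => Submodule.subset_span ?_
  obtain ⟨i, hi⟩ := hf (a, x a)
  exact ⟨i, by rw [blockConfig, hi]⟩

theorem card_mul_finrank_le_sRank_blockConfig (R : Type*) [Semiring R] [StrongRankCondition R]
    [AddCommMonoid W] [Module R W] [Module.Free R W] [Module.Finite R W] [Fintype ι] [Fintype X]
    {f : X → ι × W} (hf : Function.Surjective f) :
    Fintype.card ι * Module.finrank R W ≤ sRank (linearSpanoid R (blockConfig f)) := by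
  have hrank := finrank_range_le_sRank_linearSpanoid R (blockConfig f)
  rwa [Set.finrank, span_range_blockConfig R hf, finrank_top, Module.finrank_pi_fintype,
    Finset.sum_const, Finset.card_univ, smul_eq_mul] at hrank

theorem sIsLCS_two_linearSpanoid_blockConfig (R : Type*) [Ring R] [CharP R 2] [AddCommGroup W]
    [Module R W] [Nontrivial W] [Fintype W] {n : ℕ} {f : Fin n → ι × W}
    (hf : Function.Surjective f) {δ : ℝ} (hδ : δ * n * 2 ≤ Fintype.card W) :
    sIsLCS 2 δ (linearSpanoid R (blockConfig f)) := by
  intro i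
  obtain ⟨v, hv, hspan⟩ := exists_ne_zero_mem_span_singleton R (f i).2
  have hvv : v + v = 0 := by rw [← two_smul R v, CharTwo.two_eq_zero, zero_smul]
  let e : W ↪ Fin n :=
    ⟨fun u => Function.surjInv hf ((f i).1, u),
      (Function.injective_surjInv hf).comp (Prod.mk_right_injective _)⟩
  have he : ∀ u, blockConfig f (e u) = Pi.single (f i).1 u := fun u => by
    simp only [blockConfig, e, Function.Embedding.coeFn_mk, Function.surjInv_eq hf]
  have hdiff : ∀ u, blockConfig f (e (u + v)) - blockConfig f (e u) = Pi.single (f i).1 v :=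
    fun u => by rw [he, he, ← Pi.single_sub, add_sub_cancel_left]
  obtain ⟨M, hcard, hpair, hdisj, hrule⟩ :=
    exists_disjoint_pairs_mem_linearSpanoid (R := R) e hv hvv hdiff
  refine ⟨M, ?_, hpair, hdisj, fun A hA => hrule A hA i ?_⟩
  · rw [← hcard, Nat.cast_mul, Nat.cast_two] at hδ
    exact le_of_mul_le_mul_right hδ two_pos
  · obtain ⟨r, hr⟩ := Submodule.mem_span_singleton.1 hspan
    exact Submodule.mem_span_singleton.2 ⟨r, by rw [← Pi.single_smul, hr, blockConfig]⟩

end BlockConfig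

theorem exists_sIsLCS_two_of_mul_two_pow_le {n g m : ℕ} (hg : 0 < g) (h : g * 2 ^ (m + 1) ≤ n) :
    ∃ S : SpanoidOn (Fin n), (∀ δ : ℝ, δ * n ≤ 2 ^ m → sIsLCS 2 δ S) ∧
      g * (m + 1) ≤ sRank S := by
  have : NeZero g := ⟨hg.ne'⟩
  have hW : Fintype.card (Fin (m + 1) → ZMod 2) = 2 ^ (m + 1) := by simp [ZMod.card]
  obtain ⟨e⟩ : Nonempty (Fin g × (Fin (m + 1) → ZMod 2) ↪ Fin n) :=
    Function.Embedding.nonempty_of_card_le (by simpa [hW] using h)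
  have hf := Function.invFun_surjective e.injective
  refine ⟨linearSpanoid (ZMod 2) (blockConfig (Function.invFun e)), fun δ hδ => ?_, ?_⟩
  · refine sIsLCS_two_linearSpanoid_blockConfig (ZMod 2) hf ?_
    rw [hW, Nat.cast_pow, Nat.cast_two, pow_succ]
    gcongr
  · simpa using card_mul_finrank_le_sRank_blockConfig (ZMod 2) hf

theorem exists_block_count_and_exponent {δ : ℝ} {n : ℕ} (hδ : 0 < δ) (hδ' : δ ≤ 1 / 4)
    (hn : 1 ≤ δ * n) :
    ∃ g m : ℕ, g * 2 ^ (m + 1) ≤ n ∧ δ * n ≤ 2 ^ m ∧ Real.logb 2 (δ * n) ≤ m ∧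
      1 / 8 * (1 / δ) ≤ g := by
  -- A block has `D ≤ 4 δ n` positions, and rounding `n / D ≥ 1` down costs at most a factor `2`.
  obtain ⟨k, hk, hk'⟩ := exists_nat_pow_near hn one_lt_two
  set D : ℝ := 2 ^ (k + 2) with hD
  have hD0 : 0 < D := by positivity
  have hquot : 1 / 4 * (1 / δ) ≤ n / D := by
    rw [one_div_mul_one_div, div_le_div_iff₀ (by positivity) hD0]
    calc 1 * D = 4 * 2 ^ k := by rw [hD]; ring
      _ ≤ 4 * (δ * n) := by gcongr
      _ = n * (4 * δ) := by ring
  have hquot1 : 1 ≤ (n : ℝ) / D := by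
    refine le_trans ?_ hquot
    rw [one_div_mul_one_div, le_div_iff₀ (by positivity)]
    linarith
  refine ⟨⌊n / D⌋₊, k + 1, ?_, hk'.le, ?_, ?_⟩
  · have hfloor : (⌊n / D⌋₊ : ℝ) * 2 ^ (k + 1 + 1) ≤ n :=
      (le_div_iff₀ hD0).1 (Nat.floor_le (by positivity))
    exact_mod_cast hfloor
  · rw [Real.logb_le_iff_le_rpow one_lt_two (by linarith), Real.rpow_natCast]
    exact hk'.le
  · linarith [Nat.div_two_lt_floor hquot1]

/-- There are `c > 0` and `n₀` such that for every `0 < δ ≤ 1/4` and every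
`n ≥ n₀/δ` there is a 2-LCS on `[n]` with error-tolerance `δ` of rank at least
`c · (1/δ) · log₂(δ n)`. -/
theorem exists_two_LCS_high_rank :
    ∃ c : ℝ, 0 < c ∧ ∃ n₀ : ℕ, ∀ δ : ℝ, 0 < δ → δ ≤ 1 / 4 →
      ∀ n : ℕ, (n₀ : ℝ) / δ ≤ (n : ℝ) →
        ∃ S : SpanoidOn (Fin n), sIsLCS 2 δ S ∧
          c * (1 / δ) * Real.logb 2 (δ * n) ≤ (sRank S : ℝ) := by
  refine ⟨1 / 8, by norm_num, 1, fun δ hδ hδ' n hn => ?_⟩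
  have hδn : 1 ≤ δ * n := by rwa [Nat.cast_one, div_le_iff₀' hδ] at hn
  obtain ⟨g, m, hfit, hpow, hlog, hcount⟩ := exists_block_count_and_exponent hδ hδ' hδn
  have hg : 0 < g := Nat.cast_pos.1 (lt_of_lt_of_le (by positivity) hcount)
  obtain ⟨S, hLCS, hrank⟩ := exists_sIsLCS_two_of_mul_two_pow_le hg hfit
  refine ⟨S, hLCS δ hpow, ?_⟩
  calc 1 / 8 * (1 / δ) * Real.logb 2 (δ * n)
      ≤ g * m := mul_le_mul hcount hlog (Real.logb_nonneg one_lt_two hδn) g.cast_nonneg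
    _ ≤ g * (m + 1) := by gcongr; linarith
    _ ≤ sRank S := by exact_mod_cast hrank
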